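/- arXiv:0710.0429 — 2 statements merged into one kernel-verified Lean document; each statement's English description precedes it below -/
import Mathlib

section
/- The quadruple (W(X,Ω), concatenation, {P_ω : ω ∈ Ω}, j_X) is the free Ω-operated monoid on X. Precisely: for every monoid H, every family of maps α_ω : H → H (ω ∈ Ω), and every map f : X → H, there exists a unique monoid homomorphism φ : W(X,Ω) → H such that φ(x) = f(x) for every x ∈ X and φ(P_ω(w)) = α_ω(φ(w)) for every w ∈ W(X,Ω) and every ω ∈ Ω. -/
/-- The left bracket letter `⌊_ω` as a one-letter word. -/
def lbr {X Ω : Type*} (ω : Ω) : FreeMonoid (X ⊕ (Ω ⊕ Ω)) :=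
  FreeMonoid.of (Sum.inr (Sum.inl ω))

/-- The right bracket letter `⌋_ω` as a one-letter word. -/
def rbr {X Ω : Type*} (ω : Ω) : FreeMonoid (X ⊕ (Ω ⊕ Ω)) :=
  FreeMonoid.of (Sum.inr (Sum.inr ω))

/-- The operator `P_ω` on the free monoid: `P_ω w = ⌊_ω w ⌋_ω`. -/
def Pop {X Ω : Type*} (ω : Ω) (w : FreeMonoid (X ⊕ (Ω ⊕ Ω))) : FreeMonoid (X ⊕ (Ω ⊕ Ω)) :=
  lbr ω * w * rbr ω

/-- `(X,Ω)`-decorated Motzkin words: the smallest subset of the free monoid on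
`X ⊔ {⌊_ω} ⊔ {⌋_ω}` containing `1` and all one-letter words `x` (`x ∈ X`), closed under
concatenation and all operators `P_ω`. -/
inductive IsMW (X Ω : Type*) : FreeMonoid (X ⊕ (Ω ⊕ Ω)) → Prop
  | one : IsMW X Ω 1
  | letter (x : X) : IsMW X Ω (FreeMonoid.of (Sum.inl x))
  | mul {u v : FreeMonoid (X ⊕ (Ω ⊕ Ω))} : IsMW X Ω u → IsMW X Ω v → IsMW X Ω (u * v)
  | op (ω : Ω) {u : FreeMonoid (X ⊕ (Ω ⊕ Ω))} : IsMW X Ω u → IsMW X Ω (Pop ω u)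

/-- `W(X,Ω)` as a submonoid of the free monoid. -/
def MWsub (X Ω : Type*) : Submonoid (FreeMonoid (X ⊕ (Ω ⊕ Ω))) where
  carrier := {w | IsMW X Ω w}
  one_mem' := IsMW.one
  mul_mem' := fun h1 h2 => IsMW.mul h1 h2

/-- The operator `P_ω` restricted to `W(X,Ω)`. -/
def PopSub {X Ω : Type*} (ω : Ω) (w : MWsub X Ω) : MWsub X Ω :=
  ⟨Pop ω w.1, IsMW.op ω w.2⟩

/-- The natural map `j_X : X → W(X,Ω)` sending `x` to the one-letter word `x`. -/
def jMW {X Ω : Type*} (x : X) : MWsub X Ω :=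
  ⟨FreeMonoid.of (Sum.inl x), IsMW.letter x⟩

/-!
A word is read from right to left by a machine acting on nonempty stacks of elements of `H`: a
letter `x` multiplies the top entry by `f x` on the left, a bracket `⌋_ω` pushes `1`, and a bracket
`⌊_ω` pops the top entry `h` and multiplies the new top entry by `α ω h` on the left. Each Motzkin
word is well bracketed, so it acts as left multiplication of the top entry by a single element of
`H`, and this element is the value of the universal homomorphism at the word. Working with the
action of a word avoids having to decompose it uniquely.
-/

section StackMachine

variable {X Ω H : Type*} [Monoid H]

/-- The faithful representation of `H` on nonempty stacks, by left multiplication of the top entry.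
A nonempty stack is encoded as its top entry paired with the list of entries below it. -/
def topMul : H →* Function.End (H × List H) where
  toFun h := Prod.map (h * ·) id
  map_one' := funext fun p => Prod.ext (one_mul p.1) rfl
  map_mul' g h := funext fun p => Prod.ext (mul_assoc g h p.1) rfl

/-- The stack operation of a right bracket: start a new entry at `1`. -/
def pushOne : Function.End (H × List H) := fun p => (1, p.1 :: p.2)

/-- The stack operation of a left bracket with operator `a`: remove the top entry `h` and multiply
the entry below it by `a h`. A stack with a single entry is left unchanged; this only happens for
unbalanced words. -/
def popWith (a : H → H) : Function.End (H × List H)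
  | (h, g :: s) => (a h * g, s)
  | (h, []) => (h, [])

/-- The action of a word on nonempty stacks, its rightmost letter acting first. -/
def stackAction (α : Ω → H → H) (f : X → H) :
    FreeMonoid (X ⊕ (Ω ⊕ Ω)) →* Function.End (H × List H) :=
  FreeMonoid.lift <| Sum.elim (fun x => topMul (f x)) <|
    Sum.elim (fun ω => popWith (α ω)) fun _ => pushOne

theorem leftInverse_topMul :
    Function.LeftInverse (fun T : Function.End (H × List H) => (T (1, [])).1) topMul :=
  mul_one

theorem popWith_mul_topMul_mul_pushOne (a : H → H) (h : H) :
    popWith a * topMul h * pushOne = topMul (a h) := by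
  funext p
  change (a (h * 1) * p.1, p.2) = (a h * p.1, p.2)
  rw [mul_one]

variable (α : Ω → H → H) (f : X → H)

theorem stackAction_of_inl (x : X) :
    stackAction α f (FreeMonoid.of (Sum.inl x)) = topMul (f x) :=
  FreeMonoid.lift_eval_of _ _

theorem stackAction_Pop (ω : Ω) (w : FreeMonoid (X ⊕ (Ω ⊕ Ω))) :
    stackAction α f (Pop ω w) = popWith (α ω) * stackAction α f w * pushOne := by
  simp [Pop, lbr, rbr, stackAction]

theorem stackAction_Pop_eq_topMul {w : FreeMonoid (X ⊕ (Ω ⊕ Ω))} {h : H}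
    (hw : topMul h = stackAction α f w) (ω : Ω) :
    stackAction α f (Pop ω w) = topMul (α ω h) := by
  rw [stackAction_Pop, ← hw, popWith_mul_topMul_mul_pushOne]

theorem IsMW.stackAction_mem_mrange_topMul {w : FreeMonoid (X ⊕ (Ω ⊕ Ω))} (hw : IsMW X Ω w) :
    stackAction α f w ∈ MonoidHom.mrange (topMul (H := H)) := by
  induction hw with
  | one => exact map_one (stackAction α f) ▸ one_mem _
  | letter x => exact ⟨f x, (stackAction_of_inl α f x).symm⟩
  | mul _ _ hu hv => exact map_mul (stackAction α f) _ _ ▸ mul_mem hu hv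
  | op ω _ hu =>
    obtain ⟨h, hact⟩ := hu
    exact ⟨α ω h, (stackAction_Pop_eq_topMul α f hact ω).symm⟩

end StackMachine

namespace MWsub

variable {X Ω H : Type*}

@[elab_as_elim]
theorem induction {motive : MWsub X Ω → Prop} (one : motive 1) (letter : ∀ x, motive (jMW x))
    (mul : ∀ u v, motive u → motive v → motive (u * v))
    (op : ∀ ω w, motive w → motive (PopSub ω w)) (w : MWsub X Ω) : motive w := by
  obtain ⟨w, hw⟩ := w
  induction hw with
  | one => exact one
  | letter x => exact letter x
  | mul hu hv ihu ihv => exact mul ⟨_, hu⟩ ⟨_, hv⟩ ihu ihv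
  | op ω hu ihu => exact op ω ⟨_, hu⟩ ihu

theorem hom_ext [MulOneClass H] {α : Ω → H → H} {φ ψ : MWsub X Ω →* H}
    (hletter : ∀ x, φ (jMW x) = ψ (jMW x))
    (hφ : ∀ ω w, φ (PopSub ω w) = α ω (φ w)) (hψ : ∀ ω w, ψ (PopSub ω w) = α ω (ψ w)) :
    φ = ψ := by
  ext w
  induction w using MWsub.induction with
  | one => rw [map_one, map_one]
  | letter x => exact hletter x
  | mul u v hu hv => rw [map_mul, map_mul, hu, hv]
  | op ω w hw => rw [hφ, hψ, hw]

variable [Monoid H] (α : Ω → H → H) (f : X → H)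

/-- The homomorphism of operated monoids extending `f`, whose value at a Motzkin word is the element
of `H` by which the word multiplies the top of a stack. -/
def lift : MWsub X Ω →* H :=
  (MulEquiv.ofLeftInverse' topMul leftInverse_topMul).symm.toMonoidHom.comp <|
    ((stackAction α f).comp (MWsub X Ω).subtype).codRestrict (MonoidHom.mrange topMul)
      fun w => w.2.stackAction_mem_mrange_topMul α f

theorem topMul_lift (w : MWsub X Ω) : topMul (lift α f w) = stackAction α f w :=
  congrArg Subtype.val <|
    (MulEquiv.ofLeftInverse' topMul (leftInverse_topMul (H := H))).apply_symm_apply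
      ⟨stackAction α f w, w.2.stackAction_mem_mrange_topMul α f⟩

theorem lift_jMW (x : X) : lift α f (jMW x : MWsub X Ω) = f x :=
  leftInverse_topMul.injective <| (topMul_lift α f _).trans (stackAction_of_inl α f x)

theorem lift_PopSub (ω : Ω) (w : MWsub X Ω) : lift α f (PopSub ω w) = α ω (lift α f w) :=
  leftInverse_topMul.injective <|
    (topMul_lift α f _).trans (stackAction_Pop_eq_topMul α f (topMul_lift α f w) ω)

end MWsub

/-- `(W(X,Ω), concatenation, {P_ω}, j_X)` is the free `Ω`-operated monoid on `X`:
for every monoid `H`, family of maps `α_ω : H → H` and map `f : X → H`, there is a unique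
monoid homomorphism `φ : W(X,Ω) → H` with `φ (j_X x) = f x` for all `x ∈ X` and
`φ (P_ω w) = α_ω (φ w)` for all `w ∈ W(X,Ω)`, `ω ∈ Ω`. -/
theorem motzkinWords_free_operated_monoid
    (X Ω : Type*) [Nonempty X] [Nonempty Ω]
    (H : Type*) [Monoid H] (α : Ω → H → H) (f : X → H) :
    ∃! φ : MWsub X Ω →* H,
      (∀ x : X, φ (jMW x) = f x) ∧
      ∀ (ω : Ω) (w : MWsub X Ω), φ (PopSub ω w) = α ω (φ w) := by
  refine ⟨MWsub.lift α f, ⟨MWsub.lift_jMW α f, MWsub.lift_PopSub α f⟩, ?_⟩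
  rintro ψ ⟨hletter, hop⟩
  exact MWsub.hom_ext (fun x => (hletter x).trans (MWsub.lift_jMW α f x).symm) hop
    (MWsub.lift_PopSub α f)
end

section
/- S(X,Ω) equals the set of peak-free nonempty (X,Ω)-decorated Motzkin words; that is, for w ∈ M(X,Ω): w lies in S(X,Ω) if and only if w lies in W(X,Ω), w ≠ 1, and w contains no factor of the form ⌊_ω ⌋_{ω'} (no letter ⌊_ω immediately followed by a letter ⌋_{ω'}, for any ω, ω' ∈ Ω). -/
/-- `S(X,Ω)`: contains the letters `x ∈ X`, closed under concatenation and `P_ω`. -/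
inductive IsSW (X Ω : Type*) : FreeMonoid (X ⊕ (Ω ⊕ Ω)) → Prop
  | letter (x : X) : IsSW X Ω (FreeMonoid.of (Sum.inl x))
  | mul {u v : FreeMonoid (X ⊕ (Ω ⊕ Ω))} : IsSW X Ω u → IsSW X Ω v → IsSW X Ω (u * v)
  | op (ω : Ω) {u : FreeMonoid (X ⊕ (Ω ⊕ Ω))} : IsSW X Ω u → IsSW X Ω (Pop ω u)

/-!
A Motzkin word neither ends with a left bracket nor begins with a right one, so concatenating
Motzkin words creates no peak, and `P_ω u` has a peak besides those of `u` only when `u = 1`.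
Hence a word generated without `1` acquires no peak, and conversely a peak-free generation of a
nonempty word can use `1` only as a trivial factor of a product.
-/

section

variable {X Ω : Type*} {u v w : FreeMonoid (X ⊕ (Ω ⊕ Ω))} {ω : Ω}

/-- The letter `a` immediately followed by the letter `b` is a peak `⌊_ω ⌋_{ω'}`, where the two
brackets may carry different decorations. -/
def IsPeak (a b : X ⊕ (Ω ⊕ Ω)) : Prop :=
  ∃ ω ω' : Ω, a = Sum.inr (Sum.inl ω) ∧ b = Sum.inr (Sum.inr ω')

/-- A word is peak-free if it has no factor `⌊_ω ⌋_{ω'}`. -/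
def PeakFree (w : FreeMonoid (X ⊕ (Ω ⊕ Ω))) : Prop :=
  ¬ ∃ (ω ω' : Ω) (u v : FreeMonoid (X ⊕ (Ω ⊕ Ω))), w = u * lbr ω * rbr ω' * v

theorem pop_ne_one : Pop ω u ≠ 1 := fun h => by
  simpa [Pop, lbr, rbr] using congrArg FreeMonoid.length h

theorem peakFree_iff_isChain :
    PeakFree w ↔ (FreeMonoid.toList w).IsChain fun a b => ¬ IsPeak a b := by
  rw [List.isChain_iff_forall_rel_of_append_cons_cons]
  constructor
  · rintro hw a b l₁ l₂ hl ⟨ω, ω', rfl, rfl⟩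
    refine hw ⟨ω, ω', FreeMonoid.ofList l₁, FreeMonoid.ofList l₂, ?_⟩
    apply FreeMonoid.toList.injective
    simpa [lbr, rbr] using hl
  · rintro hw ⟨ω, ω', u, v, rfl⟩
    exact hw (l₁ := FreeMonoid.toList u) (l₂ := FreeMonoid.toList v) (by simp [lbr, rbr])
      ⟨ω, ω', rfl, rfl⟩

theorem peakFree_mul_iff : PeakFree (u * v) ↔ PeakFree u ∧ PeakFree v ∧
    ∀ a ∈ (FreeMonoid.toList u).getLast?, ∀ b ∈ (FreeMonoid.toList v).head?, ¬ IsPeak a b := by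
  simp only [peakFree_iff_isChain, FreeMonoid.toList_mul, List.isChain_append]

theorem peakFree_of (a : X ⊕ (Ω ⊕ Ω)) : PeakFree (FreeMonoid.of a) :=
  peakFree_iff_isChain.2 (List.isChain_singleton a)

theorem peakFree_lbr_mul_iff :
    PeakFree (lbr ω * v) ↔
      PeakFree v ∧ ∀ ω' : Ω, Sum.inr (Sum.inr ω') ∉ (FreeMonoid.toList v).head? := by
  have hlbr : PeakFree (lbr ω : FreeMonoid (X ⊕ (Ω ⊕ Ω))) := peakFree_of _
  rw [peakFree_mul_iff, and_iff_right hlbr]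
  simp [lbr, IsPeak]

theorem not_peakFree_pop_one : ¬ PeakFree (Pop ω (1 : FreeMonoid (X ⊕ (Ω ⊕ Ω)))) :=
  fun h => h ⟨ω, ω, 1, 1, by simp [Pop]⟩

namespace IsMW

theorem lbr_notMem_getLast? (hw : IsMW X Ω w) (ω : Ω) :
    Sum.inr (Sum.inl ω) ∉ (FreeMonoid.toList w).getLast? := by
  induction hw with
  | one => simp
  | letter x => simp
  | mul _ _ hu hv =>
    rw [FreeMonoid.toList_mul, List.getLast?_append, Option.mem_def, Option.or_eq_some_iff]
    exact fun h => h.elim hv fun h => hu h.2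
  | op ω' _ _ => simp [Pop, rbr]

theorem rbr_notMem_head? (hw : IsMW X Ω w) (ω : Ω) :
    Sum.inr (Sum.inr ω) ∉ (FreeMonoid.toList w).head? := by
  induction hw with
  | one => simp
  | letter x => simp
  | mul _ _ hu hv =>
    rw [FreeMonoid.toList_mul, List.head?_append, Option.mem_def, Option.or_eq_some_iff]
    exact fun h => h.elim hu fun h => hv h.2
  | op ω' _ _ => simp [Pop, lbr]

protected theorem peakFree_mul_iff (hu : IsMW X Ω u) :
    PeakFree (u * v) ↔ PeakFree u ∧ PeakFree v := by
  rw [peakFree_mul_iff]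
  refine and_congr_right' (and_iff_left ?_)
  rintro a ha b - ⟨ω, -, rfl, -⟩
  exact hu.lbr_notMem_getLast? ω ha

theorem peakFree_pop_iff (hu : IsMW X Ω u) : PeakFree (Pop ω u) ↔ u ≠ 1 ∧ PeakFree u := by
  rcases eq_or_ne u 1 with rfl | hne
  · simp only [not_peakFree_pop_one, ne_eq, not_true_eq_false, false_and]
  have hhead : (FreeMonoid.toList (u * rbr ω)).head? = (FreeMonoid.toList u).head? :=
    List.head?_append_of_ne_nil _ hne
  calc PeakFree (Pop ω u)
    _ ↔ PeakFree (lbr ω * (u * rbr ω)) := by rw [Pop, mul_assoc]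
    _ ↔ PeakFree (u * rbr ω) := by
      rw [peakFree_lbr_mul_iff, hhead, and_iff_left hu.rbr_notMem_head?]
    _ ↔ PeakFree u := by
      rw [hu.peakFree_mul_iff]
      exact and_iff_left (peakFree_of _)
    _ ↔ u ≠ 1 ∧ PeakFree u := (and_iff_right hne).symm

theorem isSW_of_peakFree (hw : IsMW X Ω w) (hne : w ≠ 1) (hpf : PeakFree w) : IsSW X Ω w := by
  induction hw with
  | one => exact absurd rfl hne
  | letter x => exact .letter x
  | @mul u v hu _ ihu ihv =>
    obtain ⟨hpu, hpv⟩ := hu.peakFree_mul_iff.1 hpf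
    rcases eq_or_ne u 1 with rfl | hu1
    · rw [one_mul] at hne ⊢
      exact ihv hne hpv
    rcases eq_or_ne v 1 with rfl | hv1
    · rw [mul_one]
      exact ihu hu1 hpu
    exact .mul (ihu hu1 hpu) (ihv hv1 hpv)
  | op ω hu ih =>
    obtain ⟨hu1, hpu⟩ := hu.peakFree_pop_iff.1 hpf
    exact .op ω (ih hu1 hpu)

end IsMW

namespace IsSW

theorem isMW (hw : IsSW X Ω w) : IsMW X Ω w := by
  induction hw with
  | letter x => exact .letter x
  | mul _ _ hu hv => exact .mul hu hv
  | op ω _ hu => exact .op ω hu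

theorem ne_one (hw : IsSW X Ω w) : w ≠ 1 := by
  induction hw with
  | letter x => exact FreeMonoid.of_ne_one _
  | mul _ _ hu _ => exact fun h => hu (List.append_eq_nil_iff.1 h).1
  | op ω _ _ => exact pop_ne_one

theorem peakFree (hw : IsSW X Ω w) : PeakFree w := by
  induction hw with
  | letter x => exact peakFree_of _
  | mul hu _ hpu hpv => exact hu.isMW.peakFree_mul_iff.2 ⟨hpu, hpv⟩
  | op ω hu hpu => exact hu.isMW.peakFree_pop_iff.2 ⟨hu.ne_one, hpu⟩

end IsSW

end

/-- `S(X,Ω)` is the set of peak-free nonempty `(X,Ω)`-decorated Motzkin words: a word `w`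
lies in `S(X,Ω)` iff `w ∈ W(X,Ω)`, `w ≠ 1`, and `w` contains no factor `⌊_ω ⌋_{ω'}`. -/
theorem isSW_iff_peakFree (X Ω : Type*) [Nonempty X] [Nonempty Ω]
    (w : FreeMonoid (X ⊕ (Ω ⊕ Ω))) :
    IsSW X Ω w ↔
      IsMW X Ω w ∧ w ≠ 1 ∧
        ¬ ∃ (ω ω' : Ω) (u v : FreeMonoid (X ⊕ (Ω ⊕ Ω))),
            w = u * lbr ω * rbr ω' * v :=
  ⟨fun h => ⟨h.isMW, h.ne_one, h.peakFree⟩, fun ⟨hw, hne, hpf⟩ => hw.isSW_of_peakFree hne hpf⟩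
end
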